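/- Minimum length of capacity achieving SLDCs (Corollary 4 of the paper, stated as Corollary on lengths): for all integers N ≥ 2 and K ≥ 1, the minimum code length M for which there exists a perfectly smooth locally decodable code (SLDC) with locality N, K source symbols, M coded symbols, and symbol rate R_s = C*(N,K), equals N^K. -/

import Mathlib

open scoped BigOperators

noncomputable section

/-- A finite probability space: a finite type together with a probability mass function. -/
structure FinProbSpace where
  Ω : Type
  [fin : Fintype Ω]
  p : Ω → ℝ
  nonneg : ∀ ω, 0 ≤ p ω
  sum_one : ∑ ω, p ω = 1

attribute [instance] FinProbSpace.fin

namespace FinProbSpace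

variable (P : FinProbSpace)

/-- Probability that the random variable `X` takes the value `a`. -/
def prob {α : Type} [DecidableEq α] (X : P.Ω → α) (a : α) : ℝ :=
  ∑ ω, if X ω = a then P.p ω else 0

/-- Shannon entropy (in bits) of a finitely valued random variable. -/
def H {α : Type} [Fintype α] [DecidableEq α] (X : P.Ω → α) : ℝ :=
  ∑ a, -(P.prob X a * Real.logb 2 (P.prob X a))

/-- Conditional Shannon entropy `H(X | Y) = H(X, Y) - H(Y)` (in bits). -/
def condH {α β : Type} [Fintype α] [DecidableEq α] [Fintype β] [DecidableEq β]
    (X : P.Ω → α) (Y : P.Ω → β) : ℝ :=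
  P.H (fun ω => (X ω, Y ω)) - P.H Y

/-- The tuple random variable `(X_i)_{i ∈ ι}`. -/
def tuple {ι V : Type} (X : ι → P.Ω → V) : P.Ω → ι → V := fun ω i => X i ω

/-- Joint (mutual) independence of a finite family of random variables. -/
def iIndep {ι V : Type} [Fintype ι] [DecidableEq ι] [DecidableEq V] (X : ι → P.Ω → V) : Prop :=
  ∀ a : ι → V, P.prob (P.tuple X) a = ∏ i, P.prob (X i) (a i)

/-- `X` and `Y` contain the same information about everything beyond `Z`:
`H(X | Y, Z) = H(Y | X, Z) = 0`. -/
def sameInfo {α β γ : Type} [Fintype α] [DecidableEq α] [Fintype β] [DecidableEq β]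
    [Fintype γ] [DecidableEq γ] (X : P.Ω → α) (Y : P.Ω → β) (Z : P.Ω → γ) : Prop :=
  P.condH X (fun ω => (Y ω, Z ω)) = 0 ∧ P.condH Y (fun ω => (X ω, Z ω)) = 0

end FinProbSpace

/-- A locally decodable code with `K` source symbols of entropy `Lw`, `M` coded symbols of
entropy `Lx`, and locality `N`. -/
structure LDC (K N M : ℕ) (Lw Lx : ℝ) where
  P : FinProbSpace
  V : Type
  [fV : Fintype V]
  [dV : DecidableEq V]
  V' : Type
  [fV' : Fintype V']
  [dV' : DecidableEq V']
  /-- the source symbols -/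
  W : Fin K → P.Ω → V
  /-- the coded symbols -/
  X : Fin M → P.Ω → V'
  indep : P.iIndep W
  HW : ∀ k, P.H (W k) = Lw
  coded_fn : ∀ m, ∃ f : (Fin K → V) → V', ∀ ω, X m ω = f (fun k => W k ω)
  HX : ∀ m, P.H (X m) = Lx
  /-- the decoding supersets -/
  decSets : Fin K → Finset (Finset (Fin M))
  decSets_nonempty : ∀ k, (decSets k).Nonempty
  decSets_card : ∀ k, ∀ s ∈ decSets k, s.card = N
  decodes : ∀ k, ∀ s ∈ decSets k,
    P.condH (W k) (P.tuple fun i : {x // x ∈ s} => X i.1) = 0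

attribute [instance] LDC.fV LDC.dV LDC.fV' LDC.dV'

/-- A universal LDC: every coded symbol appears in some decoding set of every source symbol. -/
def LDC.IsUniversal {K N M : ℕ} {Lw Lx : ℝ} (C : LDC K N M Lw Lx) : Prop :=
  ∀ (m : Fin M) (k : Fin K), ∃ s ∈ C.decSets k, m ∈ s

/-- A perfectly smooth LDC: for each source symbol, every coded symbol lies in the same
number of decoding sets. -/
def LDC.IsSmooth {K N M : ℕ} {Lw Lx : ℝ} (C : LDC K N M Lw Lx) : Prop :=
  ∀ (k : Fin K) (m m' : Fin M),
    ((C.decSets k).filter (fun s => m ∈ s)).card =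
      ((C.decSets k).filter (fun s => m' ∈ s)).card

/-- `C*(N, K) = N (1 + 1/N + ⋯ + 1/N^{K-1})⁻¹`. -/
def Cstar (N K : ℕ) : ℝ := N / (∑ j ∈ Finset.range K, (1 / (N : ℝ)) ^ j)

/-- An `N`-query information retrieval scheme with `K` messages of entropy `Lw` and
answer sets of sizes `Mn n` with answers of entropy `Lx`. -/
structure IRScheme (K N : ℕ) (Mn : Fin N → ℕ) (Lw Lx : ℝ) where
  P : FinProbSpace
  V : Type
  [fV : Fintype V]
  [dV : DecidableEq V]
  V' : Type
  [fV' : Fintype V']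
  [dV' : DecidableEq V']
  /-- the messages -/
  W : Fin K → P.Ω → V
  /-- `A n m` is the `m`-th possible answer of database `n` -/
  A : (n : Fin N) → Fin (Mn n) → P.Ω → V'
  indep : P.iIndep W
  HW : ∀ k, P.H (W k) = Lw
  ans_fn : ∀ n m, ∃ f : (Fin K → V) → V', ∀ ω, A n m ω = f (fun k => W k ω)
  HA : ∀ n m, P.H (A n m) = Lx
  /-- the decoding supersets: each decoding set consists of one answer index per database -/
  Q : Fin K → Finset ((n : Fin N) → Fin (Mn n))
  Q_nonempty : ∀ k, (Q k).Nonempty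
  decodes : ∀ k, ∀ q ∈ Q k, P.condH (W k) (P.tuple fun n => A n (q n)) = 0

attribute [instance] IRScheme.fV IRScheme.dV IRScheme.fV' IRScheme.dV'

/-- A repudiative (RIR_max) scheme: every possible answer of every database appears in some
decoding set of every message. -/
def IRScheme.IsRIR {K N : ℕ} {Mn : Fin N → ℕ} {Lw Lx : ℝ} (C : IRScheme K N Mn Lw Lx) : Prop :=
  ∀ (n : Fin N) (m : Fin (Mn n)) (k : Fin K), ∃ q ∈ C.Q k, q n = m

/-- A perfectly private (PIR_max) scheme: for each message there is a distribution on its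
decoding sets such that the marginal distribution of the query to each database does not
depend on the message. -/
def IRScheme.IsPIR {K N : ℕ} {Mn : Fin N → ℕ} {Lw Lx : ℝ} (C : IRScheme K N Mn Lw Lx) : Prop :=
  ∃ μ : Fin K → ((n : Fin N) → Fin (Mn n)) → ℝ,
    (∀ k q, 0 ≤ μ k q) ∧ (∀ k, ∑ q ∈ C.Q k, μ k q = 1) ∧
    (∀ (k k' : Fin K) (n : Fin N) (m : Fin (Mn n)),
      ∑ q ∈ (C.Q k).filter (fun q => q n = m), μ k q =
        ∑ q ∈ (C.Q k').filter (fun q => q n = m), μ k' q)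

/-- `C_K(N) = (1 + 1/N + ⋯ + 1/N^{K-1})⁻¹`, the capacity of PIR. -/
def CK (N K : ℕ) : ℝ := (∑ j ∈ Finset.range K, (1 / (N : ℝ)) ^ j)⁻¹

namespace FinProbSpace

variable {P : FinProbSpace} {α β γ : Type}

theorem prob_nonneg [DecidableEq α] (X : P.Ω → α) (a : α) : 0 ≤ P.prob X a :=
  Finset.sum_nonneg fun ω _ => by split_ifs <;> simp [P.nonneg]

theorem le_prob_self [DecidableEq α] (X : P.Ω → α) (ω : P.Ω) : P.p ω ≤ P.prob X (X ω) := by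
  have := Finset.single_le_sum (f := fun ω' => if X ω' = X ω then P.p ω' else 0)
    (fun ω' _ => by split_ifs <;> simp [P.nonneg]) (Finset.mem_univ ω)
  simpa [prob] using this

theorem prob_le_of_determines [DecidableEq α] [DecidableEq β] {X : P.Ω → α} {Y : P.Ω → β}
    (h : ∀ ω ω', Y ω = Y ω' → X ω = X ω') (ω : P.Ω) :
    P.prob Y (Y ω) ≤ P.prob X (X ω) := by
  refine Finset.sum_le_sum fun ω' _ => ?_
  by_cases hY : Y ω' = Y ω
  · simp [hY, h _ _ hY]
  · rw [if_neg hY]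
    split_ifs <;> simp [P.nonneg]

theorem sum_prob_mul [Fintype α] [DecidableEq α] (X : P.Ω → α) (g : α → ℝ) :
    ∑ a, P.prob X a * g a = ∑ ω, P.p ω * g (X ω) := by
  simp only [prob, Finset.sum_mul]
  rw [Finset.sum_comm]
  simp [ite_mul]

theorem sum_prob [Fintype α] [DecidableEq α] (X : P.Ω → α) : ∑ a, P.prob X a = 1 := by
  simpa [P.sum_one] using sum_prob_mul X fun _ => 1

theorem sum_prob_prodMk [Fintype α] [DecidableEq α] [DecidableEq β]
    (X : P.Ω → α) (Y : P.Ω → β) (b : β) :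
    ∑ a, P.prob (fun ω => (X ω, Y ω)) (a, b) = P.prob Y b := by
  simp only [prob, Prod.mk.injEq, ite_and]
  rw [Finset.sum_comm]
  simp

theorem H_eq_neg_sum [Fintype α] [DecidableEq α] (X : P.Ω → α) :
    P.H X = -∑ ω, P.p ω * Real.logb 2 (P.prob X (X ω)) := by
  rw [H, Finset.sum_neg_distrib, sum_prob_mul X fun a => Real.logb 2 (P.prob X a)]

theorem H_le_of_determines [Fintype α] [DecidableEq α] [Fintype β] [DecidableEq β]
    {X : P.Ω → α} {Y : P.Ω → β} (h : ∀ ω ω', Y ω = Y ω' → X ω = X ω') : P.H X ≤ P.H Y := by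
  rw [H_eq_neg_sum, H_eq_neg_sum, neg_le_neg_iff]
  refine Finset.sum_le_sum fun ω _ => ?_
  rcases (P.nonneg ω).eq_or_lt with h0 | h0
  · simp [← h0]
  · exact mul_le_mul_of_nonneg_left (Real.logb_le_logb_of_le one_lt_two
      (h0.trans_le (le_prob_self Y ω)) (prob_le_of_determines h ω)) h0.le

theorem H_congr_of_determines [Fintype α] [DecidableEq α] [Fintype β] [DecidableEq β]
    {X : P.Ω → α} {Y : P.Ω → β} (h : ∀ ω ω', Y ω = Y ω' ↔ X ω = X ω') : P.H X = P.H Y :=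
  (H_le_of_determines fun ω ω' => (h ω ω').1).antisymm
    (H_le_of_determines fun ω ω' => (h ω ω').2)

theorem sum_prob_mul_prob_div_le [Fintype α] [DecidableEq α] [Fintype β] [DecidableEq β]
    [Fintype γ] [DecidableEq γ] (X : P.Ω → α) (Y : P.Ω → β) (Z : P.Ω → γ) :
    ∑ a : α × β × γ, P.prob (fun ω => (X ω, Z ω)) (a.1, a.2.2) *
      P.prob (fun ω => (Y ω, Z ω)) a.2 / P.prob Z a.2.2 ≤ 1 := by
  simp only [Fintype.sum_prod_type]
  refine le_of_eq ?_
  calc _ = ∑ x, ∑ z, ∑ y, P.prob (fun ω => (X ω, Z ω)) (x, z) *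
        P.prob (fun ω => (Y ω, Z ω)) (y, z) / P.prob Z z := by
        exact Finset.sum_congr rfl fun x _ => Finset.sum_comm
    _ = ∑ z, P.prob Z z * P.prob Z z / P.prob Z z := by
        rw [Finset.sum_comm]
        refine Finset.sum_congr rfl fun z _ => ?_
        simp_rw [← Finset.sum_div, ← Finset.mul_sum, ← Finset.sum_mul, sum_prob_prodMk]
    _ = 1 := by simp only [mul_self_div_self, sum_prob]

/-- Nonnegativity of the conditional mutual information `I(X; Y | Z)`. -/
theorem H_prodMk_add_le [Fintype α] [DecidableEq α] [Fintype β] [DecidableEq β]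
    [Fintype γ] [DecidableEq γ] (X : P.Ω → α) (Y : P.Ω → β) (Z : P.Ω → γ) :
    P.H (fun ω => (X ω, Y ω, Z ω)) + P.H Z ≤
      P.H (fun ω => (X ω, Z ω)) + P.H (fun ω => (Y ω, Z ω)) := by
  set XYZ := fun ω => (X ω, Y ω, Z ω)
  set XZ := fun ω => (X ω, Z ω)
  set YZ := fun ω => (Y ω, Z ω)
  let g : α × β × γ → ℝ := fun a =>
    P.prob XZ (a.1, a.2.2) * P.prob YZ a.2 / (P.prob XYZ a * P.prob Z a.2.2)
  have key : ∑ ω, P.p ω * g (XYZ ω) ≤ 1 := by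
    rw [← sum_prob_mul]
    refine le_trans (Finset.sum_le_sum fun a _ => ?_) (sum_prob_mul_prob_div_le X Y Z)
    have hn : 0 ≤ P.prob XZ (a.1, a.2.2) * P.prob YZ a.2 / P.prob Z a.2.2 :=
      div_nonneg (mul_nonneg (prob_nonneg _ _) (prob_nonneg _ _)) (prob_nonneg _ _)
    rcases (prob_nonneg XYZ a).eq_or_lt with h0 | h0
    · rw [← h0, zero_mul]
      exact hn
    · apply le_of_eq
      simp only [g]
      field_simp
      rfl
  have hlog : 0 < Real.log 2 := Real.log_pos one_lt_two
  have pointwise : ∀ ω, P.p ω * (Real.logb 2 (P.prob XZ (XZ ω)) + Real.logb 2 (P.prob YZ (YZ ω))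
      - Real.logb 2 (P.prob XYZ (XYZ ω)) - Real.logb 2 (P.prob Z (Z ω))) ≤
      (P.p ω * g (XYZ ω) - P.p ω) / Real.log 2 := by
    intro ω
    rcases (P.nonneg ω).eq_or_lt with h0 | h0
    · simp [← h0]
    have h1 := h0.trans_le (le_prob_self XZ ω)
    have h2 := h0.trans_le (le_prob_self YZ ω)
    have h3 := h0.trans_le (le_prob_self XYZ ω)
    have h4 := h0.trans_le (le_prob_self Z ω)
    have hg : 0 < g (XYZ ω) := div_pos (mul_pos h1 h2) (mul_pos h3 h4)
    have e : Real.logb 2 (P.prob XZ (XZ ω)) + Real.logb 2 (P.prob YZ (YZ ω))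
      - Real.logb 2 (P.prob XYZ (XYZ ω)) - Real.logb 2 (P.prob Z (Z ω))
        = Real.log (g (XYZ ω)) / Real.log 2 := by
      change _ = Real.logb 2 (P.prob XZ (XZ ω) * P.prob YZ (YZ ω) /
        (P.prob XYZ (XYZ ω) * P.prob Z (Z ω)))
      rw [Real.logb_div (mul_pos h1 h2).ne' (mul_pos h3 h4).ne', Real.logb_mul h1.ne' h2.ne',
        Real.logb_mul h3.ne' h4.ne']
      ring
    rw [e, ← mul_div_assoc, ← mul_sub_one]
    gcongr
    exact Real.log_le_sub_one_of_pos hg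
  have total := Finset.sum_le_sum fun ω (_ : ω ∈ Finset.univ) => pointwise ω
  rw [← Finset.sum_div, Finset.sum_sub_distrib, P.sum_one] at total
  have : (∑ ω, P.p ω * g (XYZ ω) - 1) / Real.log 2 ≤ 0 :=
    div_nonpos_of_nonpos_of_nonneg (by linarith) hlog.le
  simp only [mul_sub, mul_add, Finset.sum_sub_distrib, Finset.sum_add_distrib] at total
  simp only [H_eq_neg_sum]
  linarith

theorem H_prodMk_add_le_of_determines {δ : Type} [Fintype α] [DecidableEq α] [Fintype β]
    [DecidableEq β] [Fintype γ] [DecidableEq γ] [Fintype δ] [DecidableEq δ]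
    {X : P.Ω → α} {Y : P.Ω → β} {Z : P.Ω → γ} {U : P.Ω → δ}
    (hX : ∀ ω ω', X ω = X ω' → Z ω = Z ω') (hY : ∀ ω ω', Y ω = Y ω' → Z ω = Z ω')
    (hU : ∀ ω ω', X ω = X ω' → Y ω = Y ω' → U ω = U ω') :
    P.H U + P.H Z ≤ P.H X + P.H Y := by
  have h := H_prodMk_add_le X Y Z
  have h1 : P.H U ≤ P.H (fun ω => (X ω, Y ω, Z ω)) :=
    H_le_of_determines fun ω ω' h => by
      simp only [Prod.mk.injEq] at h
      exact hU _ _ h.1 h.2.1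
  have h2 : P.H (fun ω => (X ω, Z ω)) ≤ P.H X := H_le_of_determines fun ω ω' h => by
    simp [h, hX _ _ h]
  have h3 : P.H (fun ω => (Y ω, Z ω)) ≤ P.H Y := H_le_of_determines fun ω ω' h => by
    simp [h, hY _ _ h]
  linarith

theorem iIndep.H_tuple {ι V : Type} [Fintype ι] [DecidableEq ι] [Fintype V] [DecidableEq V]
    {X : ι → P.Ω → V} (h : P.iIndep X) : P.H (P.tuple X) = ∑ i, P.H (X i) := by
  simp only [H_eq_neg_sum, Finset.sum_neg_distrib]
  rw [Finset.sum_comm]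
  congr 1
  refine Finset.sum_congr rfl fun ω _ => ?_
  rw [← Finset.mul_sum]
  rcases (P.nonneg ω).eq_or_lt with h0 | h0
  · simp [← h0]
  · rw [h]
    exact congrArg _ (Real.logb_prod _ _ fun i _ => (h0.trans_le (le_prob_self (X i) ω)).ne')

theorem H_of_subsingleton [Subsingleton α] [Fintype α] [DecidableEq α] (X : P.Ω → α) :
    P.H X = 0 := by
  have : ∀ ω, P.prob X (X ω) = 1 := fun ω => by
    simp [prob, Subsingleton.elim _ (X ω), P.sum_one]
  simp [H_eq_neg_sum, this]

theorem H_of_prob_eq [Fintype α] [DecidableEq α] {X : P.Ω → α} {c : ℝ}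
    (h : ∀ ω, P.prob X (X ω) = c⁻¹) : P.H X = Real.logb 2 c := by
  simp [H_eq_neg_sum, h, ← Finset.sum_mul, P.sum_one]

end FinProbSpace

namespace LDC

variable {K N M : ℕ} {Lw Lx : ℝ} (C : LDC K N M Lw Lx)

/-- The joint entropy of the source symbols in `A` and the coded symbols in `T`. -/
def jointH (A : Finset (Fin K)) (T : Finset (Fin M)) : ℝ :=
  C.P.H fun ω => (C.P.tuple (fun k : {x // x ∈ A} => C.W k.1) ω,
    C.P.tuple (fun i : {x // x ∈ T} => C.X i.1) ω)

/-- The entropy of the coded symbols in `T` conditioned on the source symbols in `A`. -/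
def residualH (A : Finset (Fin K)) (T : Finset (Fin M)) : ℝ :=
  C.jointH A T - A.card * Lw

theorem tuple_pair_eq_iff {A : Finset (Fin K)} {T : Finset (Fin M)} {ω ω' : C.P.Ω} :
    (C.P.tuple (fun k : {x // x ∈ A} => C.W k.1) ω,
      C.P.tuple (fun i : {x // x ∈ T} => C.X i.1) ω) =
    (C.P.tuple (fun k : {x // x ∈ A} => C.W k.1) ω',
      C.P.tuple (fun i : {x // x ∈ T} => C.X i.1) ω') ↔
    (∀ k ∈ A, C.W k ω = C.W k ω') ∧ ∀ i ∈ T, C.X i ω = C.X i ω' := by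
  simp [FinProbSpace.tuple, funext_iff]

theorem jointH_mono {A B : Finset (Fin K)} {T U : Finset (Fin M)} (hA : A ⊆ B) (hT : T ⊆ U) :
    C.jointH A T ≤ C.jointH B U := by
  refine FinProbSpace.H_le_of_determines fun ω ω' h => ?_
  rw [tuple_pair_eq_iff] at h ⊢
  exact ⟨fun k hk => h.1 k (hA hk), fun i hi => h.2 i (hT hi)⟩

theorem jointH_submodular (A B : Finset (Fin K)) (T U : Finset (Fin M)) :
    C.jointH (A ∪ B) (T ∪ U) + C.jointH (A ∩ B) (T ∩ U) ≤ C.jointH A T + C.jointH B U := by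
  refine FinProbSpace.H_prodMk_add_le_of_determines ?_ ?_ ?_ <;> intro ω ω'
  · simp only [tuple_pair_eq_iff, Finset.mem_inter]
    exact fun h => ⟨fun k hk => h.1 k hk.1, fun i hi => h.2 i hi.1⟩
  · simp only [tuple_pair_eq_iff, Finset.mem_inter]
    exact fun h => ⟨fun k hk => h.1 k hk.2, fun i hi => h.2 i hi.2⟩
  · simp only [tuple_pair_eq_iff, Finset.mem_union]
    exact fun h h' => ⟨fun k hk => hk.elim (h.1 k) (h'.1 k), fun i hi => hi.elim (h.2 i) (h'.2 i)⟩

theorem jointH_empty_empty : C.jointH ∅ ∅ = 0 :=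
  FinProbSpace.H_of_subsingleton _

theorem jointH_empty_singleton (m : Fin M) : C.jointH ∅ {m} = Lx := by
  refine Eq.trans ?_ (C.HX m)
  refine FinProbSpace.H_congr_of_determines fun ω ω' => ?_
  rw [tuple_pair_eq_iff]
  simp

theorem jointH_singleton_empty (k : Fin K) : C.jointH {k} ∅ = Lw := by
  refine Eq.trans ?_ (C.HW k)
  refine FinProbSpace.H_congr_of_determines fun ω ω' => ?_
  rw [tuple_pair_eq_iff]
  simp

theorem jointH_univ (T : Finset (Fin M)) : C.jointH Finset.univ T = K * Lw := by
  have h : C.jointH Finset.univ T = C.P.H (C.P.tuple C.W) := by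
    refine FinProbSpace.H_congr_of_determines fun ω ω' => ?_
    rw [tuple_pair_eq_iff]
    simp only [FinProbSpace.tuple, funext_iff, Finset.mem_univ, true_implies]
    refine ⟨fun h => ⟨h, fun i _ => ?_⟩, fun h => h.1⟩
    obtain ⟨f, hf⟩ := C.coded_fn i
    simp [hf, h]
  rw [h, C.indep.H_tuple]
  simp [C.HW]

theorem jointH_le_card (A : Finset (Fin K)) : C.jointH A ∅ ≤ A.card * Lw := by
  induction A using Finset.induction_on with
  | empty => simp [jointH_empty_empty]
  | insert k A hk ih =>
    have h := C.jointH_submodular {k} A ∅ ∅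
    rw [Finset.singleton_inter_of_notMem hk, Finset.empty_union, Finset.empty_inter,
      jointH_empty_empty, jointH_singleton_empty, ← Finset.insert_eq] at h
    rw [Finset.card_insert_of_notMem hk]
    push_cast
    linarith

theorem jointH_empty_right (A : Finset (Fin K)) : C.jointH A ∅ = A.card * Lw := by
  refine (C.jointH_le_card A).antisymm ?_
  have h := C.jointH_submodular A Aᶜ ∅ ∅
  rw [Finset.union_compl, Finset.inter_compl, Finset.empty_union, Finset.empty_inter,
    jointH_empty_empty, jointH_univ] at h
  have h' := C.jointH_le_card Aᶜ
  rw [Finset.card_compl, Fintype.card_fin,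
    Nat.cast_sub (by simpa using Finset.card_le_univ A)] at h'
  linarith

theorem jointH_singleton_of_mem_decSets {k : Fin K} {S : Finset (Fin M)}
    (hS : S ∈ C.decSets k) : C.jointH {k} S = C.jointH ∅ S := by
  have h := C.decodes k S hS
  rw [FinProbSpace.condH, sub_eq_zero] at h
  refine Eq.trans ?_ (h.trans ?_)
  · refine FinProbSpace.H_congr_of_determines fun ω ω' => ?_
    rw [tuple_pair_eq_iff]
    simp [FinProbSpace.tuple, funext_iff]
  · refine FinProbSpace.H_congr_of_determines fun ω ω' => ?_
    rw [tuple_pair_eq_iff]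
    simp [FinProbSpace.tuple, funext_iff]

theorem residualH_mono (A : Finset (Fin K)) {T U : Finset (Fin M)} (h : T ⊆ U) :
    C.residualH A T ≤ C.residualH A U :=
  sub_le_sub_right (C.jointH_mono subset_rfl h) _

theorem residualH_submodular (A : Finset (Fin K)) (T U : Finset (Fin M)) :
    C.residualH A (T ∪ U) + C.residualH A (T ∩ U) ≤ C.residualH A T + C.residualH A U := by
  have := C.jointH_submodular A A T U
  rw [Finset.union_self, Finset.inter_self] at this
  simp only [residualH]
  linarith

@[simp] theorem residualH_empty (A : Finset (Fin K)) : C.residualH A ∅ = 0 := by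
  simp [residualH, jointH_empty_right]

theorem residualH_nonneg (A : Finset (Fin K)) (T : Finset (Fin M)) : 0 ≤ C.residualH A T := by
  simpa using C.residualH_mono A (Finset.empty_subset T)

theorem residualH_le_sum (A : Finset (Fin K)) (T : Finset (Fin M)) :
    C.residualH A T ≤ ∑ i ∈ T, C.residualH A {i} := by
  induction T using Finset.induction_on with
  | empty => simp
  | insert i T hi ih =>
    have h := C.residualH_submodular A {i} T
    rw [Finset.singleton_inter_of_notMem hi, residualH_empty, ← Finset.insert_eq] at h
    rw [Finset.sum_insert hi]
    linarith

theorem residualH_of_mem_decSets {A : Finset (Fin K)} {k : Fin K} (hk : k ∉ A)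
    {S : Finset (Fin M)} (hS : S ∈ C.decSets k) :
    C.residualH A S = Lw + C.residualH (insert k A) S := by
  have h := C.jointH_submodular {k} A S S
  have h1 := C.jointH_mono (Finset.subset_insert k A) (subset_refl S)
  rw [Finset.singleton_inter_of_notMem hk, Finset.union_self, Finset.inter_self,
    C.jointH_singleton_of_mem_decSets hS, ← Finset.insert_eq] at h
  rw [residualH, residualH, Finset.card_insert_of_notMem hk]
  push_cast
  linarith

theorem add_residualH_singleton_le {A : Finset (Fin K)} {k : Fin K} (hk : k ∉ A)
    {S : Finset (Fin M)} (hS : S ∈ C.decSets k) {i : Fin M} (hi : i ∈ S) :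
    Lw + C.residualH (insert k A) {i} ≤ ∑ j ∈ S, C.residualH A {j} := by
  have h1 := C.residualH_le_sum A S
  have h2 := C.residualH_of_mem_decSets hk hS
  have h3 := C.residualH_mono (insert k A) (Finset.singleton_subset_iff.2 hi)
  linarith

variable {C}

theorem IsSmooth.exists_sum_eq (hC : C.IsSmooth) (hN : N ≠ 0) (k : Fin K) :
    ∃ d : ℕ, 0 < d ∧ (∀ m, ((C.decSets k).filter fun s => m ∈ s).card = d) ∧
      ∀ f : Fin M → ℝ, ∑ S ∈ C.decSets k, ∑ i ∈ S, f i = d * ∑ m, f m := by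
  obtain ⟨S, hS⟩ := C.decSets_nonempty k
  obtain ⟨i, hi⟩ : S.Nonempty := by
    rw [← Finset.card_pos, C.decSets_card k S hS]
    exact Nat.pos_of_ne_zero hN
  refine ⟨((C.decSets k).filter fun s => i ∈ s).card,
    Finset.card_pos.2 ⟨S, Finset.mem_filter.2 ⟨hS, hi⟩⟩, fun m => hC k m i, fun f => ?_⟩
  rw [Finset.sum_comm' (t' := Finset.univ) (s' := fun m => (C.decSets k).filter fun s => m ∈ s)
    (by simp), Finset.mul_sum]
  simp [hC k _ i]

theorem IsSmooth.exists_mem_decSets (hC : C.IsSmooth) (hN : N ≠ 0) (k : Fin K) (m : Fin M) :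
    ∃ S ∈ C.decSets k, m ∈ S := by
  obtain ⟨d, hd, hm, -⟩ := hC.exists_sum_eq hN k
  obtain ⟨S, hS⟩ := Finset.card_pos.1 ((hm m).symm ▸ hd)
  exact ⟨S, Finset.mem_filter.1 hS⟩

theorem IsSmooth.mul_le_mul_sum (hC : C.IsSmooth) (hN : N ≠ 0) (k : Fin K) {c : ℝ}
    {f : Fin M → ℝ} (hf : ∀ S ∈ C.decSets k, c ≤ ∑ i ∈ S, f i) : M * c ≤ N * ∑ m, f m := by
  obtain ⟨d, hd, -, hsum⟩ := hC.exists_sum_eq hN k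
  have hd' : (0 : ℝ) < d := by exact_mod_cast hd
  have h1 := Finset.sum_le_sum hf
  rw [hsum f, Finset.sum_const, nsmul_eq_mul] at h1
  have h2 := hsum fun _ => 1
  rw [Finset.sum_congr rfl fun S hS => show ∑ i ∈ S, (1 : ℝ) = N by
    simp [C.decSets_card k S hS]] at h2
  simp only [Finset.sum_const, nsmul_eq_mul, Finset.card_univ, Fintype.card_fin, mul_one] at h2
  refine le_of_mul_le_mul_left ?_ hd'
  calc (d : ℝ) * (M * c) = N * ((C.decSets k).card * c) := by linear_combination -c * h2
    _ ≤ N * (d * ∑ m, f m) := by gcongr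
    _ = d * (N * ∑ m, f m) := by ring

theorem IsSmooth.add_sum_residualH_le (hC : C.IsSmooth) (hN : N ≠ 0)
    {A : Finset (Fin K)} {k : Fin K} (hk : k ∉ A) :
    M * Lw + ∑ m, C.residualH (insert k A) {m} ≤ N * ∑ m, C.residualH A {m} := by
  have hN' : (0 : ℝ) < N := by exact_mod_cast Nat.pos_of_ne_zero hN
  have h := hC.mul_le_mul_sum hN k (c := Lw)
    (f := fun m => C.residualH A {m} - C.residualH (insert k A) {m} / N) fun S hS => by
      have := Finset.sum_le_sum fun i (hi : i ∈ S) => C.add_residualH_singleton_le hk hS hi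
      rw [Finset.sum_const, Finset.sum_add_distrib, Finset.sum_const, C.decSets_card k S hS,
        nsmul_eq_mul, nsmul_eq_mul] at this
      rw [Finset.sum_sub_distrib, ← Finset.sum_div, le_sub_iff_add_le,
        ← mul_le_mul_iff_right₀ hN', mul_add, mul_div_cancel₀ _ hN'.ne']
      exact this
  rw [Finset.sum_sub_distrib, ← Finset.sum_div, mul_sub, mul_div_cancel₀ _ hN'.ne'] at h
  linarith

end LDC

/-- The conditional entropy of a coded symbol of a capacity achieving smooth code with `K` source
symbols of entropy `L`, given `j` of the source symbols. -/
def optimalResidual (N K : ℕ) (L : ℝ) (j : ℕ) : ℝ :=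
  L / N * ∑ i ∈ Finset.range (K - j), (1 / (N : ℝ)) ^ i

theorem optimalResidual_self (N K : ℕ) (L : ℝ) : optimalResidual N K L K = 0 := by
  simp [optimalResidual]

theorem mul_optimalResidual {N K j : ℕ} (hN : N ≠ 0) (hj : j < K) (L : ℝ) :
    N * optimalResidual N K L j = L + optimalResidual N K L (j + 1) := by
  obtain ⟨t, rfl⟩ := Nat.exists_eq_add_of_lt hj
  have hN' : (N : ℝ) ≠ 0 := by exact_mod_cast hN
  rw [optimalResidual, optimalResidual, show j + t + 1 - j = t + 1 by lia,
    show j + t + 1 - (j + 1) = t by lia, Finset.sum_range_succ']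
  simp only [pow_succ, ← Finset.sum_mul]
  field_simp
  simp [add_comm]

theorem optimalResidual_pos {N K j : ℕ} (hN : N ≠ 0) (hj : j < K) {L : ℝ} (hL : 0 < L) :
    0 < optimalResidual N K L j := by
  have hN' : (0 : ℝ) < N := by exact_mod_cast Nat.pos_of_ne_zero hN
  exact mul_pos (by positivity)
    (Finset.sum_pos (fun i _ => by positivity) (by simpa using Nat.sub_ne_zero_of_lt hj))

theorem eq_optimalResidual_of_div_eq_Cstar {N K : ℕ} (hN : N ≠ 0) {Lw Lx : ℝ}
    (hLw : Lw ≠ 0) (hLx : Lx ≠ 0) (h : Lw / Lx = Cstar N K) :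
    Lx = optimalResidual N K Lw 0 := by
  have hN' : (N : ℝ) ≠ 0 := by exact_mod_cast hN
  rw [optimalResidual, Nat.sub_zero]
  rw [Cstar] at h
  have hs : ∑ j ∈ Finset.range K, (1 / (N : ℝ)) ^ j ≠ 0 := by
    intro h0
    rw [h0, div_zero] at h
    exact div_ne_zero hLw hLx h
  rw [div_eq_div_iff hLx hs] at h
  field_simp at h ⊢
  linarith

namespace LDC

variable {K N M : ℕ} {Lw Lx : ℝ} {C : LDC K N M Lw Lx}

theorem IsSmooth.mul_optimalResidual_le_sum (hC : C.IsSmooth) (hN : N ≠ 0)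
    (A : Finset (Fin K)) :
    M * optimalResidual N K Lw A.card ≤ ∑ m, C.residualH A {m} := by
  refine A.strongDownwardInductionOn (n := K) (fun A ih hA => ?_)
    (by simpa using Finset.card_le_univ A)
  rcases hA.eq_or_lt with hA | hA
  · rw [hA, optimalResidual_self, mul_zero]
    exact Finset.sum_nonneg fun m _ => C.residualH_nonneg A {m}
  · obtain ⟨k, hk⟩ : ∃ k, k ∉ A := by
      by_contra! h
      rw [Finset.eq_univ_iff_forall.2 h, Finset.card_univ, Fintype.card_fin] at hA
      exact hA.false
    have h1 := hC.add_sum_residualH_le hN hk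
    have h2 := ih (by rw [Finset.card_insert_of_notMem hk]; lia) (Finset.ssubset_insert hk)
    rw [Finset.card_insert_of_notMem hk] at h2
    have h3 := mul_optimalResidual hN hA Lw
    refine le_of_mul_le_mul_left ?_ (Nat.cast_pos.2 (Nat.pos_of_ne_zero hN) : (0 : ℝ) < N)
    linear_combination h1 + h2 + M * h3

theorem IsSmooth.residualH_singleton (hC : C.IsSmooth) (hN : N ≠ 0)
    (hLx : Lx = optimalResidual N K Lw 0) (A : Finset (Fin K)) (m : Fin M) :
    C.residualH A {m} = optimalResidual N K Lw A.card := by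
  induction A using Finset.induction_on generalizing m with
  | empty => simp [residualH, jointH_empty_singleton, hLx]
  | insert k A hk ih =>
    have hA : A.card < K := by
      simpa using Finset.card_lt_univ_of_notMem hk
    have hle : ∀ m, C.residualH (insert k A) {m} ≤ optimalResidual N K Lw (A.card + 1) := by
      intro m
      obtain ⟨S, hS, hm⟩ := hC.exists_mem_decSets hN k m
      have h := C.add_residualH_singleton_le hk hS hm
      simp only [ih, Finset.sum_const, C.decSets_card k S hS, nsmul_eq_mul,
        mul_optimalResidual hN hA] at h
      linarith
    rw [Finset.card_insert_of_notMem hk]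
    have hsum := hC.mul_optimalResidual_le_sum hN (insert k A)
    rw [Finset.card_insert_of_notMem hk] at hsum
    refine (Finset.sum_eq_sum_iff_of_le fun i _ => hle i).1 ?_ m (Finset.mem_univ m)
    refine (Finset.sum_le_sum fun i _ => hle i).antisymm ?_
    simpa using hsum

variable (C) in
/-- Given the source symbols in `A`, the coded symbols `i` and `j` determine each other. -/
def Equivalent (A : Finset (Fin K)) (i j : Fin M) : Prop :=
  C.residualH A {i, j} ≤ optimalResidual N K Lw A.card

theorem Equivalent.symm {A : Finset (Fin K)} {i j : Fin M} (h : C.Equivalent A i j) :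
    C.Equivalent A j i := by
  rwa [Equivalent, Finset.pair_comm]

theorem Equivalent.trans {A : Finset (Fin K)} {i j l : Fin M}
    (hj : C.residualH A {j} = optimalResidual N K Lw A.card)
    (h : C.Equivalent A i j) (h' : C.Equivalent A j l) : C.Equivalent A i l := by
  have h1 := C.residualH_submodular A {i, j} {j, l}
  have h2 := C.residualH_mono A (T := {i, l}) (U := {i, j} ∪ {j, l}) (by
    intro x; simp; tauto)
  have h3 := C.residualH_mono A (T := {j}) (U := {i, j} ∩ {j, l}) (by simp)
  rw [Equivalent] at *
  linarith

theorem Equivalent.mono {A : Finset (Fin K)} {i j : Fin M} {k : Fin K} (hk : k ∉ A)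
    (hi : C.residualH A {i} = optimalResidual N K Lw A.card)
    (hi' : C.residualH (insert k A) {i} = optimalResidual N K Lw (A.card + 1))
    (h : C.Equivalent A i j) : C.Equivalent (insert k A) i j := by
  have h1 := C.jointH_submodular A (insert k A) {i, j} {i}
  rw [Finset.union_eq_right.2 (Finset.subset_insert k A),
    Finset.inter_eq_left.2 (Finset.subset_insert k A),
    Finset.union_eq_left.2 (by simp), Finset.inter_eq_right.2 (by simp)] at h1
  rw [Equivalent, Finset.card_insert_of_notMem hk]
  simp only [Equivalent, residualH, Finset.card_insert_of_notMem hk] at *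
  linarith

theorem IsSmooth.equivalent_of_mem_decSets (hC : C.IsSmooth) (hN : N ≠ 0)
    (hLx : Lx = optimalResidual N K Lw 0) {A : Finset (Fin K)} {k : Fin K} (hk : k ∉ A)
    {S : Finset (Fin M)} (hS : S ∈ C.decSets k) {i j : Fin M} (hi : i ∈ S) (hj : j ∈ S) :
    C.Equivalent (insert k A) i j := by
  have hA : A.card < K := by simpa using Finset.card_lt_univ_of_notMem hk
  have h1 := C.residualH_le_sum A S
  have h2 := C.residualH_of_mem_decSets hk hS
  have h3 := C.residualH_mono (insert k A) (T := {i, j}) (U := S) (by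
    simp [Finset.insert_subset_iff, hi, hj])
  simp only [hC.residualH_singleton hN hLx, Finset.sum_const, C.decSets_card k S hS, nsmul_eq_mul,
    mul_optimalResidual hN hA] at h1
  rw [Equivalent, Finset.card_insert_of_notMem hk]
  linarith

theorem IsSmooth.not_equivalent_of_mem_decSets (hC : C.IsSmooth) (hN : N ≠ 0) (hLw : 0 < Lw)
    (hLx : Lx = optimalResidual N K Lw 0) {A : Finset (Fin K)} {k : Fin K} (hk : k ∉ A)
    {S : Finset (Fin M)} (hS : S ∈ C.decSets k) {i j : Fin M} (hi : i ∈ S) (hj : j ∈ S)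
    (hij : i ≠ j) : ¬ C.Equivalent A i j := by
  intro h
  have hA : A.card < K := by simpa using Finset.card_lt_univ_of_notMem hk
  have hpos := optimalResidual_pos hN hA hLw
  have hsub : ({i, j} : Finset (Fin M)) ⊆ S := by simp [Finset.insert_subset_iff, hi, hj]
  have h1 := C.residualH_submodular A {i, j} (S \ {i, j})
  rw [Finset.union_sdiff_of_subset hsub, Finset.inter_sdiff_self, residualH_empty] at h1
  have h2 := C.residualH_le_sum A (S \ {i, j})
  have h3 := C.residualH_of_mem_decSets hk hS
  have h4 := C.residualH_mono (insert k A) (Finset.singleton_subset_iff.2 hi)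
  have h5 := Finset.sum_sdiff (f := fun m => C.residualH A {m}) hsub
  rw [Finset.sum_pair hij] at h5
  simp only [hC.residualH_singleton hN hLx, Finset.card_insert_of_notMem hk] at h2 h4 h5
  rw [Finset.sum_const (s := S), C.decSets_card k S hS, nsmul_eq_mul,
    mul_optimalResidual hN hA] at h5
  rw [Equivalent] at h
  linarith

open Classical in
theorem IsSmooth.pow_card_le_card_equivalent (hC : C.IsSmooth) (hN : N ≠ 0) (hLw : 0 < Lw)
    (hLx : Lx = optimalResidual N K Lw 0) (A : Finset (Fin K)) (i : Fin M) :
    N ^ A.card ≤ (Finset.univ.filter fun j => C.Equivalent A i j).card := by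
  induction A using Finset.induction_on generalizing i with
  | empty =>
    rw [Finset.card_empty, pow_zero, Nat.one_le_iff_ne_zero, ← Nat.pos_iff_ne_zero,
      Finset.card_pos]
    refine ⟨i, Finset.mem_filter.2 ⟨Finset.mem_univ i, ?_⟩⟩
    rw [Equivalent, Finset.pair_eq_singleton, hC.residualH_singleton hN hLx]
  | insert k A hk ih =>
    have hr := hC.residualH_singleton hN hLx
    obtain ⟨S, hS, hi⟩ := hC.exists_mem_decSets hN k i
    rw [Finset.card_insert_of_notMem hk, pow_succ']
    calc N * N ^ A.card = ∑ s ∈ S, N ^ A.card := by simp [C.decSets_card k S hS]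
      _ ≤ ∑ s ∈ S, (Finset.univ.filter fun j => C.Equivalent A s j).card :=
        Finset.sum_le_sum fun s _ => ih s
      _ = (S.biUnion fun s => Finset.univ.filter fun j => C.Equivalent A s j).card := by
        refine (Finset.card_biUnion fun s hs t ht hst => ?_).symm
        refine Finset.disjoint_left.2 fun j hj hj' => ?_
        simp only [Finset.mem_filter, Finset.mem_univ, true_and] at hj hj'
        exact hC.not_equivalent_of_mem_decSets hN hLw hLx hk hS hs ht hst
          (hj.trans (hr A j) hj'.symm)
      _ ≤ _ := by
        refine Finset.card_le_card fun j hj => ?_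
        simp only [Finset.mem_biUnion, Finset.mem_filter, Finset.mem_univ, true_and] at hj ⊢
        obtain ⟨s, hs, hj⟩ := hj
        exact (hC.equivalent_of_mem_decSets hN hLx hk hS hi hs).trans (hr _ s)
          (hj.mono hk (hr A s) (by rw [hr, Finset.card_insert_of_notMem hk]))

theorem IsSmooth.pow_le_length (hC : C.IsSmooth) (hN : N ≠ 0) (hK : K ≠ 0) (hLw : 0 < Lw)
    (hLx : Lx = optimalResidual N K Lw 0) : N ^ K ≤ M := by
  classical
  obtain ⟨S, hS⟩ := C.decSets_nonempty ⟨0, Nat.pos_of_ne_zero hK⟩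
  obtain ⟨i, -⟩ : S.Nonempty := by
    rw [← Finset.card_pos, C.decSets_card _ S hS]
    exact Nat.pos_of_ne_zero hN
  have h := (hC.pow_card_le_card_equivalent hN hLw hLx Finset.univ i).trans
    (Finset.card_le_univ _)
  simpa using h

end LDC

/-- The uniform probability distribution on a nonempty finite type. -/
def FinProbSpace.uniform (Ω : Type) [Fintype Ω] [Nonempty Ω] : FinProbSpace where
  Ω := Ω
  p _ := (Fintype.card Ω : ℝ)⁻¹
  nonneg _ := by positivity
  sum_one := by simp

namespace FinProbSpace

theorem prob_uniform_of_surjective {G H : Type} [AddGroup G] [Fintype G] [AddGroup H]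
    [Fintype H] [DecidableEq H] (φ : G →+ H) (hφ : Function.Surjective φ) (h : H) :
    (uniform G).prob φ h = (Fintype.card H : ℝ)⁻¹ := by
  have hG : (Fintype.card G : ℝ) ≠ 0 := by exact_mod_cast Fintype.card_ne_zero
  have hH : (Fintype.card H : ℝ) ≠ 0 := by exact_mod_cast Fintype.card_ne_zero
  have hc : ∀ x, (uniform G).prob φ x = (uniform G).prob φ h := fun x => by
    have := AddMonoidHom.card_fiber_eq_of_mem_range φ (hφ x) (hφ h)
    change ∑ ω : G, (if φ ω = x then (Fintype.card G : ℝ)⁻¹ else 0) =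
      ∑ ω : G, (if φ ω = h then (Fintype.card G : ℝ)⁻¹ else 0)
    rw [← Finset.sum_filter, ← Finset.sum_filter, Finset.sum_const, Finset.sum_const, this]
  have hs := sum_prob (P := uniform G) φ
  simp only [hc, Finset.sum_const, Finset.card_univ, nsmul_eq_mul] at hs
  exact eq_inv_of_mul_eq_one_right hs

theorem H_uniform_of_surjective {G H : Type} [AddGroup G] [Fintype G] [AddGroup H]
    [Fintype H] [DecidableEq H] (φ : G →+ H) (hφ : Function.Surjective φ) :
    (uniform G).H φ = Real.logb 2 (Fintype.card H) :=
  H_of_prob_eq fun ω => prob_uniform_of_surjective φ hφ (φ ω)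

end FinProbSpace

/-- The values of a source symbol of the optimal smooth code with locality `n + 1`: one string of
`n` bits for each `s : Fin K → Fin (n + 1)`. -/
abbrev OptimalSource (K n : ℕ) : Type := (Fin K → Fin (n + 1)) → Fin n → ZMod 2

/-- The coded symbol at position `q` of the optimal smooth code. Its component at `s` sums, over
the source symbols `k`, the entry at position `q k` of the string obtained from the component of
`W_k` at `s` by inserting a zero at position `s k`. -/
def optimalSymbol {K n : ℕ} (q : Fin K → Fin (n + 1)) :
    (Fin K → OptimalSource K n) →+ ((Fin K → Fin (n + 1)) → ZMod 2) where
  toFun w s := ∑ k, (s k).insertNth (α := fun _ => ZMod 2) 0 (w k s) (q k)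
  map_zero' := by
    ext s
    refine Finset.sum_eq_zero fun k _ => ?_
    rcases Fin.eq_self_or_eq_succAbove (s k) (q k) with h | ⟨t, h⟩ <;> simp [h]
  map_add' w w' := by
    ext s
    simp only [Pi.add_apply, ← Finset.sum_add_distrib]
    refine Finset.sum_congr rfl fun k _ => ?_
    rcases Fin.eq_self_or_eq_succAbove (s k) (q k) with h | ⟨t, h⟩ <;> simp [h]

theorem optimalSymbol_apply {K n : ℕ} (q s : Fin K → Fin (n + 1))
    (w : Fin K → OptimalSource K n) :
    optimalSymbol q w s = ∑ k, (s k).insertNth (α := fun _ => ZMod 2) 0 (w k s) (q k) :=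
  rfl

theorem optimalSymbol_self {K n : ℕ} (q : Fin K → Fin (n + 1)) (w : Fin K → OptimalSource K n) :
    optimalSymbol q w q = 0 := by
  simp [optimalSymbol_apply]

theorem optimalSymbol_surjective {K n : ℕ} (q : Fin K → Fin (n + 1))
    (f : {s // s ≠ q} → ZMod 2) : ∃ w, ∀ s : {s // s ≠ q}, optimalSymbol q w s = f s := by
  have hne : ∀ s : {s // s ≠ q}, ∃ k, s.1 k ≠ q k := fun s => Function.ne_iff.1 s.2
  choose k hk using hne
  refine ⟨fun l s _ => if h : s ≠ q then if l = k ⟨s, h⟩ then f ⟨s, h⟩ else 0 else 0,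
    fun s => ?_⟩
  rw [optimalSymbol_apply, Finset.sum_eq_single (k s)]
  · obtain ⟨t, ht⟩ := Fin.exists_succAbove_eq (hk s).symm
    rw [← ht]
    simp [s.2]
  · intro l _ hl
    rcases Fin.eq_self_or_eq_succAbove (s.1 l) (q l) with h | ⟨t, h⟩
    · simp [h]
    · simp [h, hl]
  · simp

theorem H_optimalSymbol {K n : ℕ} (q : Fin K → Fin (n + 1)) :
    (FinProbSpace.uniform (Fin K → OptimalSource K n)).H (optimalSymbol q) =
      ((n + 1) ^ K - 1 : ℝ) := by
  let φ : (Fin K → OptimalSource K n) →+ ({s // s ≠ q} → ZMod 2) :=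
    { toFun := fun w s => optimalSymbol q w s
      map_zero' := by ext s; simp
      map_add' := fun w w' => by ext s; simp }
  have hφ : Function.Surjective φ := fun f => by
    obtain ⟨w, hw⟩ := optimalSymbol_surjective q f
    exact ⟨w, funext hw⟩
  have hH : (FinProbSpace.uniform (Fin K → OptimalSource K n)).H (optimalSymbol q) =
      (FinProbSpace.uniform (Fin K → OptimalSource K n)).H φ := by
    refine FinProbSpace.H_congr_of_determines fun w w' =>
      ⟨fun h => funext fun s => ?_, fun h => funext fun s => ?_⟩
    · by_cases hs : s = q
      · rw [hs]
        exact (optimalSymbol_self q w).trans (optimalSymbol_self q w').symm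
      · exact congrFun h ⟨s, hs⟩
    · exact congrFun h s.1
  rw [hH, FinProbSpace.H_uniform_of_surjective φ hφ]
  simp only [Fintype.card_fun, ZMod.card, Fintype.card_subtype_compl, Fintype.card_subtype_eq,
    Fintype.card_fin, ne_eq]
  rw [Nat.cast_pow, Nat.cast_ofNat, Real.logb_pow, Real.logb_self_eq_one one_lt_two, mul_one,
    Nat.cast_sub (Nat.one_le_pow _ _ n.succ_pos)]
  push_cast
  rfl

/-- The line through `q` in direction `k`. -/
def coordLine {K N : ℕ} (k : Fin K) (q : Fin K → Fin N) : Finset (Fin K → Fin N) :=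
  Finset.univ.image (Function.update q k)

theorem mem_coordLine {K N : ℕ} {k : Fin K} {q r : Fin K → Fin N} :
    r ∈ coordLine k q ↔ ∃ j, Function.update q k j = r := by
  simp [coordLine]

theorem self_mem_coordLine {K N : ℕ} (k : Fin K) (q : Fin K → Fin N) : q ∈ coordLine k q :=
  mem_coordLine.2 ⟨q k, Function.update_eq_self k q⟩

theorem coordLine_eq_of_mem {K N : ℕ} {k : Fin K} {q r : Fin K → Fin N}
    (h : r ∈ coordLine k q) : coordLine k q = coordLine k r := by
  obtain ⟨j, rfl⟩ := mem_coordLine.1 h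
  ext x
  simp [mem_coordLine]

theorem card_coordLine {K N : ℕ} (k : Fin K) (q : Fin K → Fin N) : (coordLine k q).card = N := by
  rw [coordLine, Finset.card_image_of_injective _ (Function.update_injective q k),
    Finset.card_univ, Fintype.card_fin]

theorem eq_of_optimalSymbol_eq {K n : ℕ} {k : Fin K} {q : Fin K → Fin (n + 1)}
    {w w' : Fin K → OptimalSource K n}
    (h : ∀ r ∈ coordLine k q, optimalSymbol r w = optimalSymbol r w') : w k = w' k := by
  ext s t
  have key : ∀ v : Fin K → OptimalSource K n, v k s t =
      optimalSymbol (Function.update q k ((s k).succAbove t)) v s -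
        optimalSymbol (Function.update q k (s k)) v s := fun v => by
    rw [optimalSymbol_apply, optimalSymbol_apply, ← Finset.sum_sub_distrib,
      Finset.sum_eq_single k]
    · simp
    · intro l _ hl
      simp [hl]
    · simp
  rw [key w, key w', h _ (mem_coordLine.2 ⟨_, rfl⟩), h _ (mem_coordLine.2 ⟨_, rfl⟩)]

/-- The capacity achieving smooth code of length `(n + 1) ^ K`. -/
def optimalCode (K n : ℕ) :
    LDC K (n + 1) ((n + 1) ^ K) (n * (n + 1) ^ K : ℝ) ((n + 1) ^ K - 1 : ℝ) where
  P := FinProbSpace.uniform (Fin K → OptimalSource K n)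
  V := OptimalSource K n
  V' := (Fin K → Fin (n + 1)) → ZMod 2
  W k w := w k
  X m := optimalSymbol (finFunctionFinEquiv.symm m)
  indep a := by
    have h1 := FinProbSpace.prob_uniform_of_surjective
      (AddMonoidHom.id (Fin K → OptimalSource K n)) Function.surjective_id a
    have h2 := fun k => FinProbSpace.prob_uniform_of_surjective
      (Pi.evalAddMonoidHom (fun _ : Fin K => OptimalSource K n) k)
      (Function.surjective_eval k) (a k)
    refine h1.trans (Eq.trans ?_ (Finset.prod_congr rfl fun k _ => h2 k).symm)
    simp
  HW k := by
    refine (FinProbSpace.H_uniform_of_surjective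
      (Pi.evalAddMonoidHom (fun _ : Fin K => OptimalSource K n) k)
      (Function.surjective_eval k)).trans ?_
    simp only [Fintype.card_fun, ZMod.card, Fintype.card_fin, ← pow_mul]
    rw [Nat.cast_pow, Nat.cast_ofNat, Real.logb_pow, Real.logb_self_eq_one one_lt_two]
    push_cast
    ring
  coded_fn m := ⟨optimalSymbol (finFunctionFinEquiv.symm m), fun _ => rfl⟩
  HX m := H_optimalSymbol _
  decSets k := Finset.univ.image fun q => (coordLine k q).map finFunctionFinEquiv.toEmbedding
  decSets_nonempty k := Finset.univ_nonempty.image _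
  decSets_card k S hS := by
    obtain ⟨q, -, rfl⟩ := Finset.mem_image.1 hS
    rw [Finset.card_map, card_coordLine]
  decodes k S hS := by
    obtain ⟨q, -, rfl⟩ := Finset.mem_image.1 hS
    refine sub_eq_zero.2 (FinProbSpace.H_congr_of_determines fun w w' => ?_)
    refine ⟨fun h => Prod.ext (eq_of_optimalSymbol_eq (q := q) fun r hr => ?_) h,
      congrArg Prod.snd⟩
    have := congrFun h ⟨finFunctionFinEquiv r, Finset.mem_map_of_mem _ hr⟩
    simpa [FinProbSpace.tuple] using this

theorem optimalCode_isSmooth (K n : ℕ) : (optimalCode K n).IsSmooth := by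
  have h : ∀ k m, ((optimalCode K n).decSets k).filter (fun s => m ∈ s) =
      {(coordLine k (finFunctionFinEquiv.symm m)).map finFunctionFinEquiv.toEmbedding} := by
    intro k m
    ext S
    simp only [optimalCode, Finset.mem_filter, Finset.mem_image, Finset.mem_univ, true_and,
      Finset.mem_singleton]
    constructor
    · rintro ⟨⟨q, rfl⟩, hm⟩
      rw [Finset.mem_map_equiv] at hm
      rw [coordLine_eq_of_mem hm]
    · rintro rfl
      exact ⟨⟨_, rfl⟩, Finset.mem_map_equiv.2 (self_mem_coordLine _ _)⟩
  intro k m m'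
  rw [h, h, Finset.card_singleton, Finset.card_singleton]

theorem Cstar_succ (K n : ℕ) (hn : n ≠ 0) :
    (n * (n + 1) ^ K : ℝ) / ((n + 1) ^ K - 1) = Cstar (n + 1) K := by
  have hn' : (n : ℝ) ≠ 0 := by exact_mod_cast hn
  have h1 : (n + 1 : ℝ) ≠ 0 := by positivity
  rw [Cstar, geom_sum_eq (by push_cast; rw [ne_eq, div_eq_one_iff_eq h1]; simpa using hn)]
  push_cast
  rw [show (1 / (n + 1 : ℝ) - 1) = -n / (n + 1) by field_simp; ring,
    show (1 / (n + 1 : ℝ)) ^ K - 1 = -((n + 1) ^ K - 1) / (n + 1) ^ K by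
      rw [div_pow, one_pow]; field_simp; ring]
  rcases eq_or_ne ((n + 1 : ℝ) ^ K - 1) 0 with h0 | h0
  · simp [h0]
  · field_simp

/-- Minimum length of capacity achieving SLDCs: for `N ≥ 2`, `K ≥ 1`, the
least code length `M` for which there exists a perfectly smooth LDC with locality `N`, `K`
source symbols and symbol rate `C*(N, K)` is `N^K`. -/
theorem sldc_min_length (K N : ℕ) (hK : 1 ≤ K) (hN : 2 ≤ N) :
    IsLeast {M : ℕ | ∃ (Lw Lx : ℝ), 0 < Lw ∧ 0 < Lx ∧
      ∃ C : LDC K N M Lw Lx, C.IsSmooth ∧ Lw / Lx = Cstar N K} (N ^ K) := by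
  have hN0 : N ≠ 0 := by lia
  have hK0 : K ≠ 0 := by lia
  constructor
  · obtain ⟨n, rfl⟩ : ∃ n, N = n + 1 := ⟨N - 1, by lia⟩
    have hn : 0 < n := by lia
    have hn' : (0 : ℝ) < n := by exact_mod_cast hn
    exact ⟨_, _, by positivity, sub_pos.2 (one_lt_pow₀ (by linarith) hK0), optimalCode K n,
      optimalCode_isSmooth K n, Cstar_succ K n hn.ne'⟩
  · rintro M ⟨Lw, Lx, hLw, hLx, C, hC, hR⟩
    exact hC.pow_le_length hN0 hK0 hLw (eq_optimalResidual_of_div_eq_Cstar hN0 hLw.ne' hLx.ne' hR)
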